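/- arXiv:2506.23651 — 2 statements merged into one kernel-verified Lean document; each statement's English description precedes it below -/
import Mathlib

section
/- Let A, B, C be categories and let G₁ : A ⥤ B and G₂ : B ⥤ C be functors such that G₂ is monadic, the composite G₁ ⋙ G₂ : A ⥤ C is monadic, and G₁ has a left adjoint. Then G₁ is monadic. -/
open CategoryTheory

/-- Morphisms compatible with the comparison algebra structures lift along a monadic functor. -/
theorem monadic_lift_hom {X Y : Type*} [Category X] [Category Y] {L : Y ⥤ X} {R : X ⥤ Y}
    (adj : L ⊣ R) (hE : (Monad.comparison adj).IsEquivalence) {x y : X} (h : R.obj x ⟶ R.obj y)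
    (hh : R.map (L.map h) ≫ R.map (adj.counit.app y) = R.map (adj.counit.app x) ≫ h) :
    ∃ f : x ⟶ y, R.map f = h := by
  let k : (Monad.comparison adj).obj x ⟶ (Monad.comparison adj).obj y := ⟨h, hh⟩
  obtain ⟨f, hf⟩ := (Monad.comparison adj).map_surjective k
  exact ⟨f, congrArg Monad.Algebra.Hom.f hf⟩

theorem monadic_faithful {X Y : Type*} [Category X] [Category Y] {L : Y ⥤ X} {R : X ⥤ Y}
    (adj : L ⊣ R) (hE : (Monad.comparison adj).IsEquivalence) : R.Faithful where
  map_injective {x y} f g h := by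
    apply (Monad.comparison adj).map_injective
    exact Monad.Algebra.Hom.ext h

/-- Every algebra is isomorphic to a comparison algebra, spelled out. -/
theorem monadic_lift_obj {X Y : Type*} [Category X] [Category Y] {L : Y ⥤ X} {R : X ⥤ Y}
    (adj : L ⊣ R) (hE : (Monad.comparison adj).IsEquivalence) {y : Y} (a : R.obj (L.obj y) ⟶ y)
    (hu : adj.unit.app y ≫ a = 𝟙 y)
    (ha : R.map (adj.counit.app (L.obj y)) ≫ a = R.map (L.map a) ≫ a) :
    ∃ (x : X) (i : y ≅ R.obj x),
      R.map (L.map i.hom) ≫ R.map (adj.counit.app x) = a ≫ i.hom := by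
  let Z : adj.toMonad.Algebra := { A := y, a := a, unit := hu, assoc := ha }
  let i := (Monad.comparison adj).objObjPreimageIso Z
  exact ⟨(Monad.comparison adj).objPreimage Z, (adj.toMonad.forget.mapIso i).symm, i.inv.h⟩

theorem monadic_cancel_aux {A : Type*} [Category A] {B : Type*} [Category B]
    {C : Type*} [Category C] {G₁ : A ⥤ B} {G₂ : B ⥤ C} {F₁ : B ⥤ A} {F₂ : C ⥤ B} {L : C ⥤ A}
    (adj₁ : F₁ ⊣ G₁) (adj₂ : F₂ ⊣ G₂) (adj : L ⊣ G₁ ⋙ G₂)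
    (hE₂ : (Monad.comparison adj₂).IsEquivalence) (hE : (Monad.comparison adj).IsEquivalence) :
    (Monad.comparison adj₁).IsEquivalence := by
  have fG₂ : G₂.Faithful := monadic_faithful adj₂ hE₂
  have fG : (G₁ ⋙ G₂).Faithful := monadic_faithful adj hE
  have fG₁ : G₁.Faithful := Functor.Faithful.of_comp G₁ G₂
  -- the comparison `L G₂ ⟶ F₁`
  obtain ⟨e, he⟩ : ∃ e : ∀ b : B, L.obj (G₂.obj b) ⟶ F₁.obj b,
      ∀ b, adj.unit.app (G₂.obj b) ≫ G₂.map (G₁.map (e b)) = G₂.map (adj₁.unit.app b) :=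
    ⟨fun b => (adj.homEquiv _ _).symm (G₂.map (adj₁.unit.app b)), fun b =>
      (adj.homEquiv_unit _ _ _).symm.trans ((adj.homEquiv _ _).apply_symm_apply _)⟩
  -- uniqueness principle
  have uniq : ∀ {c : C} {x : A} (f g : L.obj c ⟶ x),
      adj.unit.app c ≫ G₂.map (G₁.map f) = adj.unit.app c ≫ G₂.map (G₁.map g) → f = g := by
    intro c x f g h
    apply (adj.homEquiv _ _).injective
    rw [adj.homEquiv_unit, adj.homEquiv_unit]
    exact h
  have nat : ∀ {c d : C} (f : c ⟶ d),
      adj.unit.app c ≫ G₂.map (G₁.map (L.map f)) = f ≫ adj.unit.app d :=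
    fun f => (adj.unit.naturality f).symm
  have tri : ∀ x : A, adj.unit.app (G₂.obj (G₁.obj x)) ≫ G₂.map (G₁.map (adj.counit.app x)) = 𝟙 _ :=
    fun x => adj.right_triangle_components x
  have cnat : ∀ {x y : A} (f : x ⟶ y),
      L.map (G₂.map (G₁.map f)) ≫ adj.counit.app y = adj.counit.app x ≫ f :=
    fun f => adj.counit.naturality f
  have enat : ∀ {b b' : B} (f : b ⟶ b'), L.map (G₂.map f) ≫ e b' = e b ≫ F₁.map f := by
    intro b b' f
    apply uniq
    simp only [Functor.map_comp]
    rw [← Category.assoc, nat, Category.assoc, he, ← Category.assoc, he, ← G₂.map_comp,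
      ← G₂.map_comp]
    congr 1
    exact adj₁.unit.naturality f
  have ecounit : ∀ x : A, adj.counit.app x = e (G₁.obj x) ≫ adj₁.counit.app x := by
    intro x
    apply uniq (c := G₂.obj (G₁.obj x)) (x := x)
    refine (tri x).trans ?_
    rw [G₁.map_comp, G₂.map_comp, ← Category.assoc, he, ← G₂.map_comp,
      adj₁.right_triangle_components]
    exact (G₂.map_id _).symm
  have full₁ : (Monad.comparison adj₁).Full := by
    refine ⟨fun {x y} h => ?_⟩
    obtain ⟨g, hh⟩ := h
    change G₁.obj x ⟶ G₁.obj y at g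
    change G₁.map (F₁.map g) ≫ G₁.map (adj₁.counit.app y) = G₁.map (adj₁.counit.app x) ≫ g at hh
    obtain ⟨f, hf⟩ := monadic_lift_hom adj hE (x := x) (y := y) (G₂.map g) (by
      change G₂.map (G₁.map (L.map (G₂.map g))) ≫ G₂.map (G₁.map (adj.counit.app y)) =
        G₂.map (G₁.map (adj.counit.app x)) ≫ G₂.map g
      rw [← G₂.map_comp, ← G₂.map_comp]
      congr 1
      rw [ecounit, ecounit, G₁.map_comp, G₁.map_comp, Category.assoc, ← hh, ← Category.assoc,
        ← Category.assoc, ← G₁.map_comp, ← G₁.map_comp, enat, G₁.map_comp, G₁.map_comp])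
    exact ⟨f, Monad.Algebra.Hom.ext (G₂.map_injective hf)⟩
  have ess : (Monad.comparison adj₁).EssSurj := by
    refine ⟨fun Z => ?_⟩
    obtain ⟨b, a, hu, ha⟩ := Z
    change G₁.obj (F₁.obj b) ⟶ b at a
    change adj₁.unit.app b ≫ a = 𝟙 b at hu
    change G₁.map (adj₁.counit.app (F₁.obj b)) ≫ a = G₁.map (F₁.map a) ≫ a at ha
    -- `a` is compatible with the composite algebra structures
    have ha' : G₁.map (adj.counit.app (F₁.obj b)) ≫ a
        = G₁.map (L.map (G₂.map a)) ≫ G₁.map (e b) ≫ a := by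
      rw [ecounit, G₁.map_comp, Category.assoc, ha, ← Category.assoc, ← Category.assoc,
        ← G₁.map_comp, ← G₁.map_comp, enat]
    obtain ⟨x, i, hi⟩ := monadic_lift_obj adj hE (y := G₂.obj b) (G₂.map (G₁.map (e b) ≫ a))
      (by rw [G₂.map_comp, ← Category.assoc, he, ← G₂.map_comp, hu]; exact G₂.map_id b)
      (by
        change G₂.map (G₁.map (adj.counit.app (L.obj (G₂.obj b)))) ≫ _ =
          G₂.map (G₁.map (L.map (G₂.map (G₁.map (e b) ≫ a)))) ≫ _
        rw [← G₂.map_comp, ← G₂.map_comp]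
        congr 1
        rw [← Category.assoc, ← G₁.map_comp, ← cnat (e b), G₁.map_comp, Category.assoc, ha']
        simp only [Functor.map_comp, Category.assoc])
    change G₂.map (G₁.map (L.map i.hom)) ≫ G₂.map (G₁.map (adj.counit.app x)) = _ at hi
    let j : G₂.obj b ≅ G₂.obj (G₁.obj x) := i
    change G₂.map (G₁.map (L.map j.hom)) ≫ G₂.map (G₁.map (adj.counit.app x))
      = G₂.map (G₁.map (e b) ≫ a) ≫ j.hom at hi
    -- the comparison `F₂ ⟶ G₁ L`
    obtain ⟨d, hd⟩ : ∃ d : ∀ c : C, F₂.obj c ⟶ G₁.obj (L.obj c),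
        ∀ c, adj₂.unit.app c ≫ G₂.map (d c) = adj.unit.app c :=
      ⟨fun c => (adj₂.homEquiv _ _).symm (adj.unit.app c), fun c =>
        (adj₂.homEquiv_unit _ _ _).symm.trans ((adj₂.homEquiv _ _).apply_symm_apply _)⟩
    have uniq₂ : ∀ {c : C} {y : B} (f g : F₂.obj c ⟶ y),
        adj₂.unit.app c ≫ G₂.map f = adj₂.unit.app c ≫ G₂.map g → f = g := by
      intro c y f g h
      apply (adj₂.homEquiv _ _).injective
      rw [adj₂.homEquiv_unit, adj₂.homEquiv_unit]
      exact h
    have hd₁ : d (G₂.obj (G₁.obj x)) ≫ G₁.map (adj.counit.app x) = adj₂.counit.app (G₁.obj x) := by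
      apply uniq₂
      rw [G₂.map_comp, ← Category.assoc, hd, tri, adj₂.right_triangle_components]
      rfl
    have hd₂ : d (G₂.obj b) ≫ G₁.map (e b) ≫ a = adj₂.counit.app b := by
      apply uniq₂
      rw [G₂.map_comp, ← Category.assoc, hd, G₂.map_comp, ← Category.assoc, he, ← G₂.map_comp,
        hu, adj₂.right_triangle_components]
      exact G₂.map_id b
    have dnat : ∀ {c c' : C} (f : c ⟶ c'), F₂.map f ≫ d c' = d c ≫ G₁.map (L.map f) := by
      intro c c' f
      apply uniq₂
      rw [G₂.map_comp, G₂.map_comp, ← Category.assoc, ← Category.assoc, hd, nat]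
      have := adj₂.unit.naturality f
      dsimp at this
      rw [← this, Category.assoc, hd]
    have hj : G₂.map (F₂.map j.hom) ≫ G₂.map (adj₂.counit.app (G₁.obj x))
        = G₂.map (adj₂.counit.app b) ≫ j.hom := by
      rw [← hd₁, ← hd₂, G₂.map_comp (d (G₂.obj b)), Category.assoc, ← hi, ← G₂.map_comp,
        ← Category.assoc, dnat]
      simp only [Functor.map_comp, Category.assoc]
    have hj' : G₂.map (F₂.map j.inv) ≫ G₂.map (adj₂.counit.app b)
        = G₂.map (adj₂.counit.app (G₁.obj x)) ≫ j.inv := by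
      rw [Iso.eq_comp_inv, Category.assoc, ← hj, ← Category.assoc, ← G₂.map_comp, ← F₂.map_comp,
        j.inv_hom_id, F₂.map_id, G₂.map_id]
      exact Category.id_comp _
    obtain ⟨t, ht⟩ := monadic_lift_hom adj₂ hE₂ j.hom hj
    obtain ⟨s, hs⟩ := monadic_lift_hom adj₂ hE₂ j.inv hj'
    have hts : t ≫ s = 𝟙 _ := G₂.map_injective (by rw [G₂.map_comp, ht, hs]; simp)
    have hst : s ≫ t = 𝟙 _ := G₂.map_injective (by rw [G₂.map_comp, ht, hs]; simp)
    have hi' : G₁.map (L.map (G₂.map t)) ≫ G₁.map (adj.counit.app x)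
        = (G₁.map (e b) ≫ a) ≫ t := by
      apply G₂.map_injective
      rw [G₂.map_comp, G₂.map_comp _ t, ht]
      exact hi
    obtain ⟨f, hf⟩ := monadic_lift_hom adj hE (x := F₁.obj b) (y := x) (G₂.map (a ≫ t)) (by
      change G₂.map (G₁.map (L.map (G₂.map (a ≫ t)))) ≫ G₂.map (G₁.map (adj.counit.app x)) =
        G₂.map (G₁.map (adj.counit.app (F₁.obj b))) ≫ G₂.map (a ≫ t)
      rw [← G₂.map_comp, ← G₂.map_comp]
      congr 1
      rw [← Category.assoc (G₁.map _) a t, ha', G₂.map_comp, L.map_comp, G₁.map_comp,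
        Category.assoc, hi']
      simp only [Category.assoc])
    have hf' : G₁.map f = a ≫ t := G₂.map_injective hf
    have hf'' : f = F₁.map t ≫ adj₁.counit.app x := by
      apply (adj₁.homEquiv _ _).injective
      rw [adj₁.homEquiv_unit, adj₁.homEquiv_unit, hf', ← Category.assoc, hu]
      simp
    have key : G₁.map (F₁.map t) ≫ G₁.map (adj₁.counit.app x) = a ≫ t := by
      rw [← hf', hf'', G₁.map_comp]
    exact ⟨x, ⟨(Monad.Algebra.isoMk (⟨t, s, hts, hst⟩ : b ≅ G₁.obj x) key).symm⟩⟩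
  have faith : (Monad.comparison adj₁).Faithful := inferInstance
  exact { faithful := faith, full := full₁, essSurj := ess }

/-- **Cancellation lemma for monadic functors** (Bourn).
If `G₂ : B ⥤ C` is monadic, the composite `G₁ ⋙ G₂ : A ⥤ C` is monadic,
and `G₁ : A ⥤ B` has a left adjoint, then `G₁` is monadic. -/
theorem monadic_of_monadic_comp {A : Type*} [Category A] {B : Type*} [Category B]
    {C : Type*} [Category C] (G₁ : A ⥤ B) (G₂ : B ⥤ C)
    [MonadicRightAdjoint G₂] [MonadicRightAdjoint (G₁ ⋙ G₂)] [G₁.IsRightAdjoint] :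
    Nonempty (MonadicRightAdjoint G₁) :=
  ⟨{ L := G₁.leftAdjoint
     adj := Adjunction.ofIsRightAdjoint G₁
     eqv := monadic_cancel_aux _ (monadicAdjunction G₂) (monadicAdjunction (G₁ ⋙ G₂))
       inferInstance inferInstance }⟩
end

section
/- Let C and D be small categories and let G : (C ⥤ Type) ⥤ (D ⥤ Type) be a functor between the corresponding functor categories. Then the comma category Comma (𝟭 (D ⥤ Type)) G — whose objects are triples of an object d of D ⥤ Type, an object x of C ⥤ Type, and a morphism d ⟶ G.obj x — is a presheaf category (i.e., equivalent to a functor category E ⥤ Type for some small category E) if and only if G is a parametric right adjoint. -/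
open CategoryTheory CategoryTheory.Limits

/-- The canonical comparison functor `A ⥤ Over (G.obj ⊤_A)` of a functor `G : A ⥤ B`,
sending `X` to `G.map (terminal.from X)`. -/
noncomputable def CategoryTheory.Functor.praComparison {A : Type*} [Category A] {B : Type*}
    [Category B] [HasTerminal A] (G : A ⥤ B) : A ⥤ Over (G.obj (⊤_ A)) where
  obj X := Over.mk (G.map (terminal.from X))
  map {X Y} f := Over.homMk (G.map f) (by simp [← Functor.map_comp])

/-- A functor `G : A ⥤ B` (with `A` having a terminal object) is a *parametric right adjoint*
if the induced functor `A ⥤ Over (G.obj ⊤_A)` has a left adjoint. -/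
def CategoryTheory.Functor.IsParametricRightAdjoint {A : Type*} [Category A] {B : Type*}
    [Category B] [HasTerminal A] (G : A ⥤ B) : Prop :=
  G.praComparison.IsRightAdjoint

open Opposite

section
variable {C : Type} [SmallCategory C] {K : Type 1} [Category.{0} K] [HasColimitsOfSize.{0,0} K]

theorem pra_isIso_of_repr {C : Type} [SmallCategory C] {T : (Cᵒᵖ ⥤ Type) ⥤ (Cᵒᵖ ⥤ Type)}
    [PreservesColimitsOfSize.{0,0} T] (η : 𝟭 _ ⟶ T) 
    (h : ∀ X, IsIso (η.app (uliftYoneda.{0}.obj X))) : IsIso η := by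
  have (P : Cᵒᵖ ⥤ Type) : IsIso (η.app P) := by
    have hc := Presheaf.colimitOfRepresentable.{0} P
    have hc' := isColimitOfPreserves T hc
    have : ∀ j, IsIso ((Functor.whiskerLeft (Presheaf.functorToRepresentables.{0} P) η).app j) := by
      intro j
      exact h _
    have : IsIso (Functor.whiskerLeft (Presheaf.functorToRepresentables.{0} P) η) :=
      NatIso.isIso_of_isIso_app _
    let e := asIso (Functor.whiskerLeft (Presheaf.functorToRepresentables.{0} P) η)
    let i := IsColimit.coconePointsIsoOfNatIso hc hc' e
    have : η.app P = i.hom := by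
      apply hc.hom_ext
      intro j
      refine Eq.trans ?_ (IsColimit.comp_coconePointsIsoOfNatIso_hom hc hc' e j).symm
      exact η.naturality _
    rw [this]
    exact Iso.isIso_hom i
  exact NatIso.isIso_of_isIso_app η

theorem pra_recognition (A : C ⥤ K) [A.Full] [A.Faithful]
    (h1 : ∀ c, PreservesColimitsOfSize.{0,0} (coyoneda.obj (op (A.obj c))))
    (h2 : ∀ {X Y : K} (f : X ⟶ Y), 
      (∀ c, Function.Bijective (fun g : A.obj c ⟶ X => g ≫ f)) → IsIso f) :
    (Presheaf.restrictedULiftYoneda.{0} A).IsEquivalence := by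
  let N := Presheaf.restrictedULiftYoneda.{0} A
  let L := uliftYoneda.{0}.leftKanExtension A
  let α : A ⟶ uliftYoneda.{0} ⋙ L := uliftYoneda.{0}.leftKanExtensionUnit A
  let adj : L ⊣ N := Presheaf.uliftYonedaAdjunction.{0} L α
  have : PreservesColimitsOfSize.{0,0} N := by
    have (c : Cᵒᵖ) : PreservesColimitsOfSize.{0,0} (N ⋙ (evaluation _ _).obj c) := by
      have := h1 c.unop
      let e : coyoneda.obj (op (A.obj c.unop)) ⋙ uliftFunctor.{0} ≅ N ⋙ (evaluation _ _).obj c :=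
        NatIso.ofComponents (fun X => Iso.refl _)
      exact preservesColimits_of_natIso e
    exact ⟨fun {J} _ => preservesColimitsOfShape_of_evaluation _ _ inferInstance⟩
  have : N.ReflectsIsomorphisms := ⟨fun {X Y} f hf => by
    apply h2
    intro c
    have : IsIso ((N.map f).app (op c)) := inferInstance
    rw [isIso_iff_bijective] at this
    refine ⟨fun a b hab => ?_, fun b => ?_⟩
    · exact congrArg ULift.down (this.1 (a₁ := ULift.up a) (a₂ := ULift.up b) (congrArg ULift.up hab))
    · obtain ⟨a, ha⟩ := this.2 (ULift.up b)
      exact ⟨a.down, congrArg ULift.down ha⟩⟩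
  have hα : IsIso α := by dsimp [α]; infer_instance
  have : IsIso adj.unit := by
    apply pra_isIso_of_repr
    intro X
    have : ∀ Z, IsIso ((adj.unit.app (uliftYoneda.{0}.obj X)).app Z) := by
      intro Z
      have key (z : (uliftYoneda.{0}.obj X).obj Z) :
          (adj.unit.app (uliftYoneda.{0}.obj X)).app Z z = ULift.up (A.map z.down ≫ α.app X) := by
        refine (Presheaf.uliftYonedaAdjunction_unit_app_app.{0} L α _ z).trans ?_
        congr 1
        refine Eq.trans ?_ (α.naturality z.down).symm
        congr 1
      rw [isIso_iff_bijective]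
      refine ⟨fun a b hab => ?_, fun b => ?_⟩
      · rw [key, key] at hab
        have := congrArg ULift.down hab
        exact ULift.ext _ _ (A.map_injective ((cancel_mono (α.app X)).1 this))
      · refine ⟨ULift.up (A.preimage (b.down ≫ inv (α.app X))), ?_⟩
        refine (key _).trans ?_
        apply ULift.ext
        change A.map (A.preimage _) ≫ _ = _
        simp
    exact NatIso.isIso_of_isIso_app _
  have : ∀ X, IsIso (adj.counit.app X) := by
    intro X
    have := adj.right_triangle_components X
    have : IsIso (N.map (adj.counit.app X)) := by
      rw [show N.map (adj.counit.app X) = inv (adj.unit.app (N.obj X)) from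
        (IsIso.eq_inv_of_hom_inv_id this)]
      infer_instance
    exact isIso_of_reflects_iso _ N
  have : IsIso adj.counit := NatIso.isIso_of_isIso_app _
  exact (adj.toEquivalence).isEquivalence_inverse
end

section
universe v₁ v₂ u₁ u₂
variable {A : Type u₁} [Category.{v₁} A] {B : Type u₂} [Category.{v₂} B] [HasTerminal A] (G : A ⥤ B)

/-- `(d, x, φ) ↦ (d ⟶ G x ⟶ G 1)` -/
noncomputable def praR : Comma (𝟭 B) G ⥤ Over (G.obj (⊤_ A)) where
  obj X := Over.mk (X.hom ≫ G.map (terminal.from X.right))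
  map {X Y} f := Over.homMk f.left (by
    have := f.w
    dsimp at this ⊢
    rw [← Category.assoc, this, Category.assoc, ← G.map_comp, terminal.comp_from])

noncomputable def praI : Over (G.obj (⊤_ A)) ⥤ Comma (𝟭 B) G where
  obj Y := { left := Y.left, right := ⊤_ A, hom := Y.hom }
  map {Y Z} f := { left := f.left, right := 𝟙 _ }

noncomputable def praJ : A ⥤ Comma (𝟭 B) G where
  obj x := { left := G.obj x, right := x, hom := 𝟙 _ }
  map {Y Z} f := { left := G.map f, right := f }

noncomputable def praRI : praR G ⊣ praI G := Adjunction.mkOfHomEquiv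
  { homEquiv := fun X Y =>
      { toFun := fun f => { left := f.left, right := terminal.from _, w := by
                              have := Over.w f
                              dsimp [praR, praI] at this ⊢
                              exact this }
        invFun := fun g => Over.homMk g.left (by
          have := g.w
          dsimp [praR, praI] at this ⊢
          rw [this]; congr 2; exact Subsingleton.elim _ _)
        left_inv := fun f => by ext; rfl
        right_inv := fun g => by
          ext
          · rfl
          · exact Subsingleton.elim (α := _ ⟶ ⊤_ A) _ _ }
    homEquiv_naturality_left_symm := fun f g => by ext; rfl
    homEquiv_naturality_right := fun f g => by
      ext
      · rfl
      · exact Subsingleton.elim (α := _ ⟶ ⊤_ A) _ _ }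

noncomputable def praSJ : Comma.snd (𝟭 B) G ⊣ praJ G := Adjunction.mkOfHomEquiv
  { homEquiv := fun X y =>
      { toFun := fun f => { left := X.hom ≫ G.map f, right := f, w := by simp [praJ] }
        invFun := fun g => g.right
        left_inv := fun f => rfl
        right_inv := fun g => by
          ext
          · have := g.w
            dsimp [praJ] at this ⊢
            simpa using this.symm
          · rfl }
    homEquiv_naturality_left_symm := fun f g => by rfl
    homEquiv_naturality_right := fun {X _ _} f g => by
      ext
      · change X.hom ≫ G.map (f ≫ g) = (X.hom ≫ G.map f) ≫ G.map g
        simp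
      · rfl }

noncomputable def praJR : praJ G ⋙ praR G ≅ G.praComparison :=
  NatIso.ofComponents (fun x => Over.isoMk (Iso.refl _) 
    (by simp [praJ, praR, Functor.praComparison])) (fun f => by
      ext; simp [praJ, praR, Functor.praComparison])

instance : (praI G).Full := ⟨fun {X Y} g => ⟨Over.homMk g.left (by
    have := g.w
    dsimp [praI] at this ⊢
    rw [this, show g.right = 𝟙 (⊤_ A) from Subsingleton.elim (α := _ ⟶ ⊤_ A) _ _,
      G.map_id]
    exact Category.comp_id _), by
    ext
    · rfl
    · exact Subsingleton.elim (α := _ ⟶ ⊤_ A) _ _⟩⟩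

instance : (praI G).Faithful := ⟨fun {X Y} f g h => by
  have := congrArg (fun k : (praI G).obj X ⟶ (praI G).obj Y => k.left) h
  exact Over.OverMorphism.ext this⟩

theorem pra_essImage (X : Comma (𝟭 B) G) (h : IsTerminal X.right) : (praI G).essImage X :=
  ⟨(praR G).obj X, ⟨Comma.isoMk (Iso.refl _) (terminalIsTerminal.uniqueUpToIso h) (by
    simp [praI, praR]
    rw [← G.map_comp, show terminal.from X.right ≫ h.from (⊤_ A) = 𝟙 _ from h.hom_ext _ _]
    simp)⟩⟩

/-- if `r` and `q` reflect onto the same subcategory then `r` is a right adjoint if `q` is -/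
theorem pra_transfer {K : Type*} [Category K] {B1 B2 : Type*} [Category B1] [Category B2]
    {r : K ⥤ B1} {I : B1 ⥤ K} {q : K ⥤ B2} {R : B2 ⥤ K} [I.Full] [I.Faithful] [R.Full] [R.Faithful]
    (adj1 : r ⊣ I) (adj2 : q ⊣ R) (h : I.essImage = R.essImage) [q.IsRightAdjoint] :
    r.IsRightAdjoint := by
  have hI : ∀ j, R.essImage (I.obj j) := fun j => h ▸ I.obj_mem_essImage j
  let e := Functor.essImage.liftFunctor I R hI
  let i : e ⋙ R ≅ I := Functor.essImage.liftFunctorCompIso I R hI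
  have : e.Faithful := Functor.Faithful.of_comp_iso i
  have : e.Full := Functor.Full.of_comp_faithful_iso i
  have : e.EssSurj := ⟨fun Y => by
    have := R.obj_mem_essImage Y
    rw [← h] at this
    obtain ⟨X, ⟨k⟩⟩ := this
    exact ⟨X, ⟨R.preimageIso (i.app X ≪≫ k)⟩⟩⟩
  have : e.IsEquivalence := { }
  let adj3 : q ⋙ e.inv ⊣ e ⋙ R := adj2.comp e.asEquivalence.symm.toAdjunction
  let adj4 := adj3.ofNatIsoRight i
  exact Functor.isRightAdjoint_of_iso (adj4.leftAdjointUniq adj1)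
end

section
variable {C D : Type} [SmallCategory C] [SmallCategory D] (G : (C ⥤ Type) ⥤ (D ⥤ Type))

/-- The subterminal object `(0, 1, !)`. -/
noncomputable def praU : Comma (𝟭 (D ⥤ Type)) G :=
  { left := ⊥_ _, right := ⊤_ _, hom := initial.to (G.obj _) }

/-- Objects that look terminal to everything over `U`. -/
def praClosed {K : Type*} [Category K] (U : K) (X : K) : Prop :=
  ∀ Z : K, Nonempty (Z ⟶ U) → Nonempty (Unique (Z ⟶ X))

theorem pra_initial_empty (d : D) : IsEmpty ((⊥_ (D ⥤ Type)).obj d) := by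
  let T : D ⥤ Type := (Functor.const D).obj PEmpty
  exact ⟨fun x => ((initial.to T).app d x).elim⟩

/-- a functor with empty values is initial -/
def pra_isInitial {E : Type} [SmallCategory E] (F : E ⥤ Type) (h : ∀ e, IsEmpty (F.obj e)) :
    IsInitial F :=
  IsInitial.ofUniqueHom (fun Y => { app := fun e => ↾fun z => (h e).elim z
                                    naturality := fun e _ _ => by ext z; exact (h e).elim z })
    (fun Y m => by ext e z; exact (h e).elim z)

theorem praI_essImage_iff (X : Comma (𝟭 (D ⥤ Type)) G) :
    (praI G).essImage X ↔ praClosed (praU G) X := by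
  constructor
  · rintro ⟨Y, ⟨i⟩⟩ Z ⟨f⟩
    have hZ : IsInitial Z.left := pra_isInitial _ fun e =>
      ⟨fun z => (pra_initial_empty e).elim (f.left.app e z)⟩
    let u : Unique ((praR G).obj Z ⟶ Y) :=
      { default := Over.homMk (hZ.to _) (hZ.hom_ext _ _)
        uniq := fun g => Over.OverMorphism.ext (hZ.hom_ext _ _) }
    exact ⟨(((praRI G).homEquiv Z Y).trans (i.homToEquiv (Z := Z))).symm.unique⟩
  · intro h
    apply pra_essImage
    refine IsTerminal.ofUniqueHom (fun z => ?_) ?_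
    · let Z : Comma (𝟭 (D ⥤ Type)) G := { left := ⊥_ _, right := z, hom := initial.to (G.obj _) }
      exact (h Z ⟨{ left := 𝟙 _, right := terminal.from _, 
                    w := initialIsInitial.hom_ext _ _ }⟩).some.default.right
    · intro z m
      let Z : Comma (𝟭 (D ⥤ Type)) G := { left := ⊥_ _, right := z, hom := initial.to (G.obj _) }
      let m' : Z ⟶ X := { left := initial.to _, right := m, w := initialIsInitial.hom_ext _ _ }
      have := (h Z ⟨{ left := 𝟙 _, right := terminal.from _,
                      w := initialIsInitial.hom_ext _ _ }⟩).some.uniq m'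
      exact congrArg (fun k : Z ⟶ X => k.right) this

theorem pra_forward {K : Type 1} [Category.{0} K] (U : K) {B1 : Type*} [Category B1]
    {r : K ⥤ B1} {I : B1 ⥤ K} [I.Full] [I.Faithful] (adj1 : r ⊣ I)
    (hI : ∀ X, I.essImage X ↔ praClosed U X)
    {E : Type} [SmallCategory E] (Φ : K ≌ E ⥤ Type) : r.IsRightAdjoint := by
  let P : ObjectProperty E := fun e => IsEmpty ((Φ.functor.obj U).obj e)
  let ρ : (E ⥤ Type) ⥤ (P.FullSubcategory ⥤ Type) := (Functor.whiskeringLeft _ _ _).obj P.ι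
  let adjL : P.ι.lan ⊣ ρ := P.ι.lanAdjunction Type
  let adjR : ρ ⊣ P.ι.ran := P.ι.ranAdjunction Type
  have : ρ.IsRightAdjoint := adjL.isRightAdjoint
  let q := Φ.functor ⋙ ρ
  let R := P.ι.ran ⋙ Φ.inverse
  let adj2 : q ⊣ R := Φ.toAdjunction.comp adjR
  have : q.IsRightAdjoint := inferInstance
  have : IsIso adjR.counit := Functor.reflective' _
  have ff := adjR.fullyFaithfulROfIsIsoCounit
  have := ff.full
  have := ff.faithful
  have : R.Full := Functor.Full.comp _ _
  have : R.Faithful := Functor.Faithful.comp _ _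
  have hR : ∀ Y, praClosed U (R.obj Y) := by
    rintro Y Z ⟨f⟩
    have hZ : IsInitial (q.obj Z) := pra_isInitial _ fun e =>
      ⟨fun z => e.property.elim ((Φ.functor.map f).app e.obj z)⟩
    let u : Unique (q.obj Z ⟶ Y) :=
      { default := hZ.to _
        uniq := fun g => hZ.hom_ext _ _ }
    exact ⟨(adj2.homEquiv Z Y).symm.unique⟩
  have hpt : ∀ X, praClosed U X → ∀ e, ¬ P e → Nonempty (Unique ((Φ.functor.obj X).obj e)) := by
    intro X hX e he
    simp only [P, not_isEmpty_iff] at he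
    obtain ⟨u⟩ := he
    obtain ⟨v⟩ := hX (Φ.inverse.obj (coyoneda.obj (op e)))
      ⟨(Φ.symm.toAdjunction.homEquiv _ _).symm (coyonedaEquiv.symm u)⟩
    let v' : Unique (Φ.symm.functor.obj (coyoneda.obj (op e)) ⟶ X) := v
    exact ⟨((Φ.symm.toAdjunction.homEquiv _ _).trans coyonedaEquiv).symm.unique⟩
  apply pra_transfer adj1 adj2
  ext X
  rw [hI]
  constructor
  · intro h
    have hq : IsIso (q.map (adj2.unit.app X)) := inferInstance
    have hpw : ∀ e, IsIso ((Φ.functor.map (adj2.unit.app X)).app e) := by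
      intro e
      by_cases he : P e
      · exact inferInstanceAs (IsIso ((q.map (adj2.unit.app X)).app ⟨e, he⟩))
      · obtain ⟨u⟩ := hpt _ h e he
        obtain ⟨v⟩ := hpt _ (hR (q.obj X)) e he
        rw [isIso_iff_bijective]
        exact ⟨fun a b _ => u.instSubsingleton.elim a b, fun b => ⟨u.default, v.instSubsingleton.elim _ _⟩⟩
    have : IsIso (Φ.functor.map (adj2.unit.app X)) := NatIso.isIso_of_isIso_app _
    have : IsIso (adj2.unit.app X) := isIso_of_reflects_iso _ Φ.functor
    exact ⟨q.obj X, ⟨(asIso (adj2.unit.app X)).symm⟩⟩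
  · rintro ⟨Y, ⟨i⟩⟩ Z hZ
    obtain ⟨u⟩ := hR Y Z hZ
    exact ⟨(i.homToEquiv (Z := Z)).symm.unique⟩

theorem pra_mp {E : Type} [SmallCategory E] (Φ : Comma (𝟭 (D ⥤ Type)) G ≌ E ⥤ Type) :
    G.IsParametricRightAdjoint := by
  have := pra_forward (praU G) (praRI G) (praI_essImage_iff G) Φ
  have : (praJ G).IsRightAdjoint := (praSJ G).isRightAdjoint
  exact Functor.isRightAdjoint_of_iso (praJR G)
end

section
/-- The fibre functor -/
def praFib {S : Type} (s : S) : Over S ⥤ Type where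
  obj Z := { z : Z.left // Z.hom z = s }
  map {Z W} f := ↾fun z => ⟨f.left z.1, by
    have := ConcreteCategory.congr_hom (Over.w f) z.1
    exact this.trans z.2⟩

def praFibR {S : Type} (s : S) : Type ⥤ Over S where
  obj T := Over.mk (Y := Σ t : S, (t = s → T)) (↾fun p => p.1)
  map {T T'} f := Over.homMk (↾fun p => ⟨p.1, fun h => f (p.2 h)⟩) (by rfl)

theorem praFib_sigma {S T : Type} {s : S} (p : Σ t : S, (t = s → T)) (x : S) (h : p.1 = x) :
    (⟨x, fun e => p.2 (h.trans e)⟩ : Σ t : S, (t = s → T)) = p := by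
  subst h; rfl

theorem praFib_fst {S : Type} {s : S} {Z : Over S} {T : Type} (g : Z ⟶ (praFibR s).obj T) 
    (z : Z.left) : Sigma.fst (β := fun t : S => t = s → T) (g.left z) = Z.hom z := by
  have := ConcreteCategory.congr_hom (Over.w g) z
  exact this

def praFibAdj {S : Type} (s : S) : praFib s ⊣ praFibR s := Adjunction.mkOfHomEquiv
  { homEquiv := fun Z T =>
      { toFun := fun f => Over.homMk (↾fun z => ⟨Z.hom z, fun h => f ⟨z, h⟩⟩) (by rfl)
        invFun := fun g => ↾fun z => Sigma.snd (β := fun t : S => t = s → T) (g.left z.1)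
            ((praFib_fst g z.1).trans z.2)
        left_inv := fun f => by rfl
        right_inv := fun g => by
          apply Over.OverMorphism.ext
          ext z
          exact praFib_sigma (T := T) (g.left z) _ (praFib_fst g z) }
    homEquiv_naturality_left_symm := fun f g => by rfl
    homEquiv_naturality_right := fun f g => by rfl }

variable {D : Type} [SmallCategory D]

theorem pra_over_post_preserves (P : D ⥤ Type) (d : D) :
    PreservesColimitsOfSize.{0,0} (Over.post (X := P) ((evaluation D Type).obj d)) := by
  have : PreservesColimitsOfSize.{0,0} (Over.post (X := P) ((evaluation D Type).obj d) ⋙ Over.forget _) :=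
    inferInstanceAs (PreservesColimitsOfSize.{0,0} (Over.forget P ⋙ (evaluation D Type).obj d))
  exact preservesColimits_of_reflects_of_preserves _ (Over.forget _)

/-- the representable at an element of `P` -/
def praEl (P : D ⥤ Type) (d : D) (f : P.obj d) : Over P :=
  Over.mk (Y := coyoneda.obj (op d)) (coyonedaEquiv.symm f)

def praElEquiv (P : D ⥤ Type) (d : D) (f : P.obj d) (Z : Over P) :
    (praEl P d f ⟶ Z) ≃ { z : Z.left.obj d // Z.hom.app d z = f } where
  toFun g := ⟨coyonedaEquiv (F := Z.left) g.left, by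
    have := congrArg coyonedaEquiv (Over.w g)
    simpa [praEl, coyonedaEquiv_comp] using this⟩
  invFun z := Over.homMk (coyonedaEquiv.symm z.1) (by
    apply coyonedaEquiv.injective
    simpa [praEl, coyonedaEquiv_comp] using z.2)
  left_inv g := by
    apply Over.OverMorphism.ext
    exact (coyonedaEquiv (F := Z.left)).symm_apply_apply g.left
  right_inv z := by
    apply Subtype.ext
    exact (coyonedaEquiv (F := Z.left)).apply_symm_apply z.1

def praElIso (P : D ⥤ Type) (d : D) (f : P.obj d) :
    Over.post (X := P) ((evaluation D Type).obj d) ⋙ praFib (S := P.obj d) f ≅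
      coyoneda.obj (op (praEl P d f)) :=
  NatIso.ofComponents (fun Z => (praElEquiv P d f Z).symm.toIso) (by
    intro Z W g
    ext z
    apply (praElEquiv P d f W).injective
    refine ((praElEquiv P d f W).apply_symm_apply _).trans ?_
    apply Subtype.ext
    change _ = coyonedaEquiv (F := W.left) (coyonedaEquiv.symm _ ≫ _)
    rw [coyonedaEquiv_comp, Equiv.apply_symm_apply]
    rfl)

theorem praEl_preserves (P : D ⥤ Type) (d : D) (f : P.obj d) :
    PreservesColimitsOfSize.{0,0} (coyoneda.obj (op (praEl P d f))) := by
  have := pra_over_post_preserves P d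
  have := (praFibAdj (S := P.obj d) f).leftAdjoint_preservesColimits
  exact preservesColimits_of_natIso (praElIso P d f)

end

section
universe v u₁ u₂
variable {A : Type u₁} [Category.{v} A] {B : Type u₂} [Category.{v} B] [HasTerminal A] (G : A ⥤ B)
  {L : Over (G.obj (⊤_ A)) ⥤ A} (adj : L ⊣ G.praComparison)

/-- the left adjoint of `praR` -/
noncomputable def praLobj (Y : Over (G.obj (⊤_ A))) : Comma (𝟭 B) G :=
  { left := Y.left, right := L.obj Y, hom := (adj.unit.app Y).left }

noncomputable def praLequiv (Y : Over (G.obj (⊤_ A))) (X : Comma (𝟭 B) G) :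
    (praLobj G adj Y ⟶ X) ≃ (Y ⟶ (praR G).obj X) where
  toFun g := Over.homMk g.left (by
    have h1 := g.w
    have h2 := Over.w (adj.unit.app Y)
    dsimp [praLobj, praR, Functor.praComparison] at h1 h2 ⊢
    rw [← Category.assoc, h1, Category.assoc, ← G.map_comp, terminal.comp_from, h2])
  invFun a := 
    { left := a.left
      right := (adj.homEquiv Y X.right).symm (Over.homMk (a.left ≫ X.hom) (by
        have := Over.w a
        dsimp [praR, Functor.praComparison] at this ⊢
        rw [Category.assoc, this]))
      w := by
        have := congrArg (fun k : Y ⟶ G.praComparison.obj X.right => k.left)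
          ((adj.homEquiv Y X.right).apply_symm_apply (Over.homMk (a.left ≫ X.hom) (by
            have := Over.w a
            dsimp [praR, Functor.praComparison] at this ⊢
            rw [Category.assoc, this])))
        rw [adj.homEquiv_unit] at this
        exact this.symm }
  left_inv g := by
    ext
    · rfl
    · refine (Equiv.symm_apply_eq _).2 ?_
      refine Eq.trans ?_ (adj.homEquiv_unit _ _ _).symm
      apply Over.OverMorphism.ext
      exact g.w
  right_inv a := by ext; rfl

noncomputable def praLiso (Y : Over (G.obj (⊤_ A))) :
    praR G ⋙ coyoneda.obj (op Y) ≅ coyoneda.obj (op (praLobj G adj Y)) :=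
  NatIso.ofComponents (fun X => (praLequiv G adj Y X).symm.toIso) (by
    intro X X' f
    ext a
    apply (praLequiv G adj Y X').injective
    refine ((praLequiv G adj Y X').apply_symm_apply _).trans ?_
    apply Over.OverMorphism.ext
    rfl)
end

section
variable {C D : Type} [SmallCategory C] [SmallCategory D] (G : (C ⥤ Type) ⥤ (D ⥤ Type))
  {L : Over (G.obj (⊤_ _)) ⥤ (C ⥤ Type)} (adj : L ⊣ G.praComparison)

noncomputable def praZero (c : C) : Comma (𝟭 (D ⥤ Type)) G :=
  { left := ⊥_ _, right := coyoneda.obj (op c), hom := initial.to (G.obj _) }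

noncomputable def praZeroEquiv (c : C) (X : Comma (𝟭 (D ⥤ Type)) G) :
    (praZero G c ⟶ X) ≃ X.right.obj c where
  toFun g := coyonedaEquiv (F := X.right) g.right
  invFun x := 
    { left := initial.to _
      right := coyonedaEquiv.symm x
      w := initialIsInitial.hom_ext _ _ }
  left_inv g := by
    ext1
    · exact initialIsInitial.hom_ext _ _
    · exact (coyonedaEquiv (F := X.right)).symm_apply_apply g.right
  right_inv x := (coyonedaEquiv (F := X.right)).apply_symm_apply x

noncomputable def praZeroIso (c : C) :
    Comma.snd (𝟭 (D ⥤ Type)) G ⋙ (evaluation C Type).obj c ≅ coyoneda.obj (op (praZero G c)) :=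
  NatIso.ofComponents (fun X => (praZeroEquiv G c X).symm.toIso) (by
    intro X X' f
    ext z
    apply (praZeroEquiv G c X').injective
    refine ((praZeroEquiv G c X').apply_symm_apply _).trans ?_
    change _ = coyonedaEquiv (F := X'.right) (coyonedaEquiv.symm _ ≫ _)
    rw [coyonedaEquiv_comp, Equiv.apply_symm_apply]
    rfl)

/-- the generating tiny objects -/
noncomputable def praGen : C ⊕ (Σ d : D, (G.obj (⊤_ _)).obj d) → Comma (𝟭 (D ⥤ Type)) G
  | .inl c => praZero G c
  | .inr p => praLobj G adj (praEl _ p.1 p.2)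

theorem praGen_preserves (i) : PreservesColimitsOfSize.{0,0} (coyoneda.obj (op (praGen G adj i))) := by
  rcases i with c | ⟨d, f⟩
  · have := (praSJ G).leftAdjoint_preservesColimits
    exact preservesColimits_of_natIso (praZeroIso G c)
  · have := praEl_preserves _ d f
    have := (praRI G).leftAdjoint_preservesColimits
    exact preservesColimits_of_natIso (praLiso G adj (praEl _ d f))

theorem praGen_conservative {X Y : Comma (𝟭 (D ⥤ Type)) G} (f : X ⟶ Y)
    (h : ∀ i, Function.Bijective (fun g : praGen G adj i ⟶ X => g ≫ f)) : IsIso f := by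
  have hi : ∀ i, IsIso ((coyoneda.obj (op (praGen G adj i))).map f) := fun i => by
    rw [isIso_iff_bijective]; exact h i
  have hr : IsIso f.right := by
    have : ∀ c, IsIso (f.right.app c) := fun c => by
      have := hi (.inl c)
      exact (NatIso.isIso_map_iff (praZeroIso G c) f).2 this
    exact NatIso.isIso_of_isIso_app _
  have hl : IsIso f.left := by
    have : ∀ d, IsIso (f.left.app d) := fun d => by
      have key : ∀ p, IsIso ((Over.post (X := G.obj (⊤_ _)) ((evaluation D Type).obj d) ⋙ 
          praFib (S := (G.obj (⊤_ _)).obj d) p).map ((praR G).map f)) := by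
        intro p
        have := hi (.inr ⟨d, p⟩)
        have := (NatIso.isIso_map_iff (praLiso G adj (praEl _ d p)) f).2 this
        exact (NatIso.isIso_map_iff (praElIso _ d p) _).2 this
      simp only [isIso_iff_bijective] at key
      have hw : ∀ x, ((praR G).obj Y).hom.app d (f.left.app d x) = ((praR G).obj X).hom.app d x := by
        intro x
        have := Over.w ((praR G).map f)
        exact ConcreteCategory.congr_hom (NatTrans.congr_app this d) x
      rw [isIso_iff_bijective]
      refine ⟨fun a b hab => ?_, fun b => ?_⟩
      · have := (key (((praR G).obj X).hom.app d a)).1 (a₁ := ⟨a, rfl⟩) (a₂ := ⟨b, by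
          refine (hw b).symm.trans ?_
          rw [← hw a]
          exact congrArg _ hab.symm⟩) (Subtype.ext hab)
        exact congrArg Subtype.val this
      · obtain ⟨a, ha⟩ := (key (((praR G).obj Y).hom.app d b)).2 ⟨b, rfl⟩
        exact ⟨a.1, congrArg Subtype.val ha⟩
    exact NatIso.isIso_of_isIso_app _
  exact (Comma.isoMk (asIso f.left) (asIso f.right) f.w).isIso_hom

theorem pra_mpr (h : G.IsParametricRightAdjoint) : 
    ∃ (E : Type) (_ : SmallCategory E),
        Nonempty (Comma (𝟭 (D ⥤ Type)) G ≌ E ⥤ Type) := by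
  obtain ⟨L, ⟨adj⟩⟩ := h
  have := pra_recognition (inducedFunctor (praGen G adj)) (praGen_preserves G adj)
    (praGen_conservative G adj)
  exact ⟨(InducedCategory _ (praGen G adj))ᵒᵖ, inferInstance, ⟨Functor.asEquivalence
    (Presheaf.restrictedULiftYoneda.{0} (inducedFunctor (praGen G adj)))⟩⟩
end

/-- **Carboni–Johnstone**: for a functor `G` between presheaf categories, the Artin gluing
`Comma (𝟭 (D ⥤ Type)) G` is a presheaf category if and only if `G` is a parametric right
adjoint. -/
theorem comma_presheaf_iff_parametricRightAdjoint {C D : Type} [SmallCategory C]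
    [SmallCategory D] (G : (C ⥤ Type) ⥤ (D ⥤ Type)) :
    (∃ (E : Type) (_ : SmallCategory E),
        Nonempty (Comma (𝟭 (D ⥤ Type)) G ≌ E ⥤ Type)) ↔
      G.IsParametricRightAdjoint := by
  exact ⟨fun ⟨_, _, ⟨Φ⟩⟩ => pra_mp G Φ, pra_mpr G⟩
end
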